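/- Let G be a group generated by a finite set S and let H_1, H_2 be stable subgroups of G. Then H_1 ∩ H_2 is a stable subgroup of G. -/

import Mathlib

open Pointwise

section BasicDefs

variable {G : Type*} [Group G]

/-- The word length of `g` with respect to the generating set `S`
(words use letters from `S ∪ S⁻¹`). -/
noncomputable def wordLength (S : Set G) (g : G) : ℕ :=
  sInf {n : ℕ | ∃ l : List G, l.length = n ∧ (∀ x ∈ l, x ∈ S ∨ x⁻¹ ∈ S) ∧ l.prod = g}

/-- The word metric on `G` with respect to the generating set `S`. -/
noncomputable def wordDist (S : Set G) (g h : G) : ℝ :=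
  (wordLength S (g⁻¹ * h) : ℝ)

/-- The closed `r`-neighborhood of a subset `A` with respect to the word metric `d_S`. -/
def nbhd (S : Set G) (r : ℝ) (A : Set G) : Set G :=
  {g : G | ∃ a ∈ A, wordDist S g a ≤ r}

/-- The distance between two subsets: the infimum of distances between their elements. -/
noncomputable def setDist (S : Set G) (A B : Set G) : ℝ :=
  sInf {r : ℝ | ∃ a ∈ A, ∃ b ∈ B, r = wordDist S a b}

/-- The conjugate subgroup `H^g = g H g⁻¹`. -/
def conjSub (g : G) (H : Subgroup G) : Subgroup G :=
  H.map (MulAut.conj g).toMonoidHom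

end BasicDefs

/-- `γ` restricted to `{0, …, n}` is a `(K, ε)`-quasigeodesic for the distance function `d`. -/
def IsQuasigeodesic {α : Type*} (d : α → α → ℝ) (K ε : ℝ) (n : ℕ) (γ : ℕ → α) : Prop :=
  ∀ i j : ℕ, i ≤ n → j ≤ n →
    (1 / K) * |(i : ℝ) - (j : ℝ)| - ε ≤ d (γ i) (γ j) ∧
      d (γ i) (γ j) ≤ K * |(i : ℝ) - (j : ℝ)| + ε

/-- `γ` restricted to `{0, …, n}` is a geodesic for the distance function `d`. -/
def IsGeodesic {α : Type*} (d : α → α → ℝ) (n : ℕ) (γ : ℕ → α) : Prop :=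
  ∀ i j : ℕ, i ≤ n → j ≤ n → d (γ i) (γ j) = |(i : ℝ) - (j : ℝ)|

/-- The path `γ` (on `{0, …, n}`) is `f`-stable: every `(K, ε)`-quasigeodesic with endpoints
on `γ` stays in the `f K ε`-neighborhood of `γ`. -/
def IsStablePath {α : Type*} (d : α → α → ℝ) (f : ℝ → ℝ → ℝ) (n : ℕ) (γ : ℕ → α) : Prop :=
  ∀ K ε : ℝ, 1 ≤ K → 0 ≤ ε → ∀ (m : ℕ) (η : ℕ → α),
    IsQuasigeodesic d K ε m η →
    (∃ i ≤ n, η 0 = γ i) → (∃ i ≤ n, η m = γ i) →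
    ∀ j ≤ m, ∃ i ≤ n, d (η j) (γ i) ≤ f K ε

/-- The Gromov product `⟨x, y⟩_w` with respect to a distance function `d`. -/
noncomputable def gromovProd {α : Type*} (d : α → α → ℝ) (w x y : α) : ℝ :=
  (d w x + d w y - d x y) / 2

/-- Gromov hyperbolicity of a distance function, via the four-point condition. -/
def IsHyperbolicDist {α : Type*} (d : α → α → ℝ) : Prop :=
  ∃ δ : ℝ, 0 ≤ δ ∧ ∀ w x y z : α,
    min (gromovProd d w x y) (gromovProd d w y z) - δ ≤ gromovProd d w x z

section GroupDefs

variable {G : Type*} [Group G]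

/-- `H` is a stable subgroup of `(G, d_S)` with stability function `f`: `H` has a finite
generating set `T` such that the inclusion `(H, d_T) → (G, d_S)` is a quasi-isometric
embedding sending every `d_T`-geodesic to an `f`-stable quasigeodesic of `(G, d_S)`. -/
def IsStableSubgroupWith (S : Set G) (H : Subgroup G) (f : ℝ → ℝ → ℝ) : Prop :=
  ∃ T : Set H, T.Finite ∧ Subgroup.closure T = ⊤ ∧
    (∃ μ c : ℝ, 1 ≤ μ ∧ 0 ≤ c ∧ ∀ h₁ h₂ : H,
      (1 / μ) * wordDist T h₁ h₂ - c ≤ wordDist S (h₁ : G) (h₂ : G) ∧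
        wordDist S (h₁ : G) (h₂ : G) ≤ μ * wordDist T h₁ h₂ + c) ∧
    ∀ (n : ℕ) (γ : ℕ → H), IsGeodesic (wordDist T) n γ →
      (∃ K ε : ℝ, 1 ≤ K ∧ 0 ≤ ε ∧
        IsQuasigeodesic (wordDist S) K ε n (fun i => (γ i : G))) ∧
      IsStablePath (wordDist S) f n (fun i => (γ i : G))

/-- `H` is a stable subgroup of `(G, d_S)`. -/
def IsStableSubgroup (S : Set G) (H : Subgroup G) : Prop :=
  ∃ f : ℝ → ℝ → ℝ, IsStableSubgroupWith S H f

/-- The family `Q` of subgroups is hyperbolically embedded in `(G, X)`: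
(Q1) geometric separation, (Q2) finite generation, (Q3) uniform quasi-isometric embedding. -/
def IsHypEmbFamily {G : Type*} [Group G] {ι : Type*} (X : Set G) (Q : ι → Subgroup G) : Prop :=
  (∀ ε : ℝ, 0 < ε → ∃ R : ℝ, ∀ (g : G) (i j : ι),
      (∃ a ∈ (Q i : Set G) ∩ nbhd X ε (g • (Q j : Set G)),
        ∃ b ∈ (Q i : Set G) ∩ nbhd X ε (g • (Q j : Set G)), R ≤ wordDist X a b) →
      i = j ∧ g ∈ Q i) ∧
  ∃ Y : ι → Set G, (∀ i, (Y i).Finite ∧ Y i ⊆ (Q i : Set G) ∧ Subgroup.closure (Y i) = Q i) ∧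
    ∃ μ c : ℝ, 1 ≤ μ ∧ 0 ≤ c ∧ ∀ i : ι, ∀ h ∈ Q i,
      (wordLength (Y i) h : ℝ) ≤ μ * (wordLength X h : ℝ) + c

/-- The subset `H` of `G` satisfies the WPD condition in `(G, X)`. -/
def WPDSet (X : Set G) (H : Set G) : Prop :=
  ∀ ε : ℝ, 0 < ε → ∃ N : ℝ, 0 < N ∧ ∀ h₁ h₂ : G, h₁ ∈ H → h₂ ∈ H →
    N < wordDist X h₁ h₂ →
    {g : G | wordDist X h₁ (g * h₁) < ε ∧ wordDist X h₂ (g * h₂) < ε}.Finite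

/-- A quasimorphism on `G`. -/
def IsQuasimorphism (q : G → ℝ) : Prop :=
  ∃ D : ℝ, 0 ≤ D ∧ ∀ x y : G, |q (x * y) - q x - q y| ≤ D

/-- A homogeneous quasimorphism on `G`. -/
def IsHomogeneousQM (q : G → ℝ) : Prop :=
  IsQuasimorphism q ∧ ∀ (x : G) (n : ℕ), q (x ^ n) = (n : ℝ) * q x

/-- `H` is a quasiconvex subgroup of `(G, d_S)`: every geodesic with endpoints in `H`
lies in a uniformly bounded neighborhood of `H`. -/
def IsQuasiconvex (S : Set G) (H : Subgroup G) : Prop :=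
  ∃ C : ℝ, 0 ≤ C ∧ ∀ (n : ℕ) (γ : ℕ → G), IsGeodesic (wordDist S) n γ →
    γ 0 ∈ H → γ n ∈ H → ∀ i ≤ n, ∃ h ∈ H, wordDist S (γ i) h ≤ C

end GroupDefs

/-!
Let `T` be a finite generating set of `H₁`. A `d_T`-geodesic joining two points of `H₁ ∩ H₂` maps
to a quasigeodesic of `G` with endpoints in `H₂`, hence stays close to `H₂`. Since balls of `G` are
finite, a point of `H₁` close to `H₂` is close to `H₁ ∩ H₂`, so `H₁ ∩ H₂` is quasiconvex in
`(H₁, d_T)`; therefore it is finitely generated and quasi-isometrically embedded in `H₁`.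
Consequently a geodesic `γ` of `H₁ ∩ H₂` is a quasigeodesic of `G` that stays close to each stable
geodesic `δ` of `H₁` between two of its points. By connectedness `δ` also stays close to `γ`, and
`γ` inherits the stability of `δ`.
-/

section Coarse

variable {α β : Type*}

/-- `φ` is a `(K, ε)`-quasi-isometric embedding for the distance functions `d` and `d'`. -/
def IsQIEmbedding (d : α → α → ℝ) (d' : β → β → ℝ) (K ε : ℝ) (φ : α → β) : Prop :=
  ∀ x y, 1 / K * d x y - ε ≤ d' (φ x) (φ y) ∧ d' (φ x) (φ y) ≤ K * d x y + ε

theorem IsQIEmbedding.comp {χ : Type*} {d : α → α → ℝ} {d' : β → β → ℝ} {d'' : χ → χ → ℝ}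
    {K ε K' ε' : ℝ} {φ : α → β} {ψ : β → χ} (hψ : IsQIEmbedding d' d'' K' ε' ψ)
    (hφ : IsQIEmbedding d d' K ε φ) (hK' : 1 ≤ K') (hε : 0 ≤ ε) :
    IsQIEmbedding d d'' (K' * K) (K' * ε + ε') (ψ ∘ φ) := by
  intro x y
  have : 0 ≤ K' := zero_le_one.trans hK'
  constructor
  · have hinv : 1 / K' * ε ≤ K' * ε :=
      mul_le_mul_of_nonneg_right ((div_le_one₀ (by positivity)).2 hK' |>.trans hK') hε
    calc 1 / (K' * K) * d x y - (K' * ε + ε')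
        ≤ 1 / K' * (1 / K * d x y - ε) - ε' := by
          rw [mul_sub, ← mul_assoc, one_div_mul_one_div]; linarith
      _ ≤ 1 / K' * d' (φ x) (φ y) - ε' := by gcongr; exact (hφ x y).1
      _ ≤ d'' (ψ (φ x)) (ψ (φ y)) := (hψ _ _).1
  · calc d'' (ψ (φ x)) (ψ (φ y)) ≤ K' * d' (φ x) (φ y) + ε' := (hψ _ _).2
      _ ≤ K' * (K * d x y + ε) + ε' := by gcongr; exact (hφ x y).2
      _ = K' * K * d x y + (K' * ε + ε') := by ring

theorem IsQIEmbedding.isQuasigeodesic {d : α → α → ℝ} {d' : β → β → ℝ} {K ε : ℝ} {φ : α → β}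
    (hφ : IsQIEmbedding d d' K ε φ) {n : ℕ} {γ : ℕ → α} (hγ : IsGeodesic d n γ) :
    IsQuasigeodesic d' K ε n (fun i ↦ φ (γ i)) := by
  intro i j hi hj
  simpa only [hγ i j hi hj] using hφ (γ i) (γ j)

theorem IsQuasigeodesic.shift {d : α → α → ℝ} {K ε : ℝ} {n : ℕ} {γ : ℕ → α}
    (hγ : IsQuasigeodesic d K ε n γ) {a b : ℕ} (hab : a ≤ b) (hb : b ≤ n) :
    IsQuasigeodesic d K ε (b - a) (fun i ↦ γ (a + i)) := by
  intro i j hi hj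
  simpa using hγ (a + i) (a + j) (by lia) (by lia)

theorem IsQuasigeodesic.dist_succ_le {d : α → α → ℝ} {K ε : ℝ} {n : ℕ} {γ : ℕ → α}
    (hγ : IsQuasigeodesic d K ε n γ) {k : ℕ} (hk : k < n) : d (γ k) (γ (k + 1)) ≤ K + ε := by
  simpa using (hγ k (k + 1) hk.le hk).2

variable {d : PseudoMetric α ℝ}

theorem isGeodesic_of_dist_succ_le_one {n : ℕ} {γ : ℕ → α}
    (hstep : ∀ i < n, d (γ i) (γ (i + 1)) ≤ 1) (hlen : (n : ℝ) ≤ d (γ 0) (γ n)) :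
    IsGeodesic d n γ := by
  have hle {i j : ℕ} (hij : i ≤ j) (hj : j ≤ n) : d (γ i) (γ j) ≤ (j : ℝ) - i := by
    induction j, hij using Nat.le_induction with
    | base => simp
    | succ j _ ih =>
      push_cast
      linarith [d.triangle (γ i) (γ j) (γ (j + 1)), ih (by lia), hstep j (by lia)]
  have heq {i j : ℕ} (hij : i ≤ j) (hj : j ≤ n) : d (γ i) (γ j) = (j : ℝ) - i := by
    have h0i := hle i.zero_le (hij.trans hj)
    push_cast at h0i
    linarith [hle hij hj, hle hj le_rfl, d.triangle (γ 0) (γ i) (γ n),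
      d.triangle (γ i) (γ j) (γ n)]
  intro i j hi hj
  rcases le_total i j with hij | hji
  · rw [heq hij hj, abs_sub_comm, abs_of_nonneg (sub_nonneg.2 (Nat.cast_le.2 hij))]
  · rw [d.symm, heq hji hi, abs_of_nonneg (sub_nonneg.2 (Nat.cast_le.2 hji))]

theorem exists_adjacent_of_cover {A B : ℕ → Prop} {n : ℕ} (hA : A 0) (hB : B n)
    (hcover : ∀ k ≤ n, A k ∨ B k) : ∃ k ≤ n, A k ∧ (B k ∨ k < n ∧ B (k + 1)) := by
  induction n with
  | zero => exact ⟨0, le_rfl, hA, .inl hB⟩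
  | succ n ih =>
    by_cases hBn : B n
    · obtain ⟨k, hk, hAk, hBk⟩ := ih hBn fun k hk ↦ hcover k (hk.trans n.le_succ)
      exact ⟨k, hk.trans n.le_succ, hAk, hBk.imp_right fun h ↦ ⟨h.1.trans n.lt_succ_self, h.2⟩⟩
    · exact ⟨n, n.le_succ, (hcover n n.le_succ).resolve_right hBn, .inr ⟨n.lt_succ_self, hB⟩⟩

/-- The distance within which a `(K, ε)`-quasigeodesic stays from a path with steps of length at
most `L` that joins its endpoints inside its `r`-neighbourhood. -/
def trackingRadius (K ε L r : ℝ) : ℝ :=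
  K * (K * (2 * r + L + ε)) + ε + r

theorem IsQuasigeodesic.exists_dist_le {K ε L r : ℝ} {m n : ℕ} {δ γ : ℕ → α}
    (hδ : IsQuasigeodesic d K ε m δ) (hK : 0 < K) (hL : 0 ≤ L)
    (hstep : ∀ k < n, d (γ k) (γ (k + 1)) ≤ L) (h0 : γ 0 = δ 0) (hn : γ n = δ m)
    (hclose : ∀ k ≤ n, ∃ u ≤ m, d (γ k) (δ u) ≤ r) {s : ℕ} (hs : s ≤ m) :
    ∃ k ≤ n, d (δ s) (γ k) ≤ trackingRadius K ε L r := by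
  have hr : 0 ≤ r := by
    obtain ⟨u, -, hu⟩ := hclose 0 n.zero_le
    exact (d.nonneg _ _).trans hu
  -- Connectedness: some vertex of `γ` is close to `δ` before `s`, and it or the next one is
  -- close to `δ` after `s`.
  obtain ⟨k, hk, ⟨u, hus, hu⟩, hB⟩ := exists_adjacent_of_cover
    (A := fun k ↦ ∃ u ≤ s, d (γ k) (δ u) ≤ r)
    (B := fun k ↦ ∃ v, s ≤ v ∧ v ≤ m ∧ d (γ k) (δ v) ≤ r)
    ⟨0, s.zero_le, by rwa [h0, d.refl]⟩ ⟨m, hs, le_rfl, by rwa [hn, d.refl]⟩ fun k hk ↦ by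
      obtain ⟨u, hum, hu⟩ := hclose k hk
      exact (le_total u s).imp (⟨u, ·, hu⟩) (⟨u, ·, hum, hu⟩)
  obtain ⟨v, hsv, hvm, hv⟩ : ∃ v, s ≤ v ∧ v ≤ m ∧ d (γ k) (δ v) ≤ L + r := by
    rcases hB with ⟨v, hsv, hvm, hv⟩ | ⟨hkn, v, hsv, hvm, hv⟩
    · exact ⟨v, hsv, hvm, by linarith⟩
    · exact ⟨v, hsv, hvm, by linarith [d.triangle (γ k) (γ (k + 1)) (δ v), hstep k hkn]⟩
  have huv : |(u : ℝ) - v| ≤ K * (2 * r + L + ε) := by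
    rw [← div_le_iff₀' hK, div_eq_inv_mul, ← one_div]
    linarith [(hδ u v (hus.trans hs) hvm).1, d.triangle (δ u) (γ k) (δ v), d.symm (δ u) (γ k)]
  have hsu : |(s : ℝ) - u| ≤ |(u : ℝ) - v| := by
    rw [abs_sub_comm (u : ℝ)]
    have : (u : ℝ) ≤ s := mod_cast hus
    have : (s : ℝ) ≤ v := mod_cast hsv
    exact abs_le_abs_of_nonneg (by linarith) (by linarith)
  refine ⟨k, hk, ?_⟩
  calc d (δ s) (γ k) ≤ d (δ s) (δ u) + d (γ k) (δ u) := by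
        rw [d.symm (γ k)]
        exact d.triangle _ _ _
    _ ≤ K * |(s : ℝ) - u| + ε + r := add_le_add (hδ s u hs (hus.trans hs)).2 hu
    _ ≤ K * (K * (2 * r + L + ε)) + ε + r := by gcongr; exact hsu.trans huv

theorem IsStablePath.exists_dist_le {f : ℝ → ℝ → ℝ} {K ε μ c : ℝ} {m n : ℕ} {δ γ : ℕ → α}
    (hδ : IsStablePath d f m δ) (hδq : IsQuasigeodesic d μ c m δ) (hμ : 0 < μ)
    (hγ : IsQuasigeodesic d K ε n γ) (hK : 1 ≤ K) (hε : 0 ≤ ε) (h0 : γ 0 = δ 0)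
    (hn : γ n = δ m) {s : ℕ} (hs : s ≤ m) :
    ∃ k ≤ n, d (δ s) (γ k) ≤ trackingRadius μ c (K + ε) (f K ε) :=
  hδq.exists_dist_le hμ (by positivity) (fun _ ↦ hγ.dist_succ_le) h0 hn
    (hδ K ε hK hε n γ hγ ⟨0, m.zero_le, h0⟩ ⟨m, le_rfl, hn⟩) hs

theorem IsQuasigeodesic.isStablePath {f : ℝ → ℝ → ℝ} {K ε μ c : ℝ} {n : ℕ} {γ : ℕ → α}
    (hγ : IsQuasigeodesic d K ε n γ) (hK : 1 ≤ K) (hε : 0 ≤ ε) (hμ : 0 < μ)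
    (hδ : ∀ a b, a ≤ b → b ≤ n → ∃ (m : ℕ) (δ : ℕ → α), δ 0 = γ a ∧ δ m = γ b ∧
      IsQuasigeodesic d μ c m δ ∧ IsStablePath d f m δ) :
    IsStablePath d (fun K' ε' ↦ f K' ε' + trackingRadius μ c (K + ε) (f K ε)) n γ := by
  rintro K' ε' hK' hε' p η hη ⟨i, hi, hηi⟩ ⟨j, hj, hηj⟩ t ht
  obtain ⟨m, δ, h0, hm, hδq, hδs⟩ := hδ (min i j) (max i j) min_le_max (max_le hi hj)
  have hend {k : ℕ} (hk : k = min i j ∨ k = max i j) : ∃ u ≤ m, γ k = δ u := by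
    rcases hk with rfl | rfl
    exacts [⟨0, m.zero_le, h0.symm⟩, ⟨m, le_rfl, hm.symm⟩]
  obtain ⟨s, hs, hts⟩ := hδs K' ε' hK' hε' p η hη
    (hηi ▸ hend (by lia)) (hηj ▸ hend (by lia)) t ht
  obtain ⟨k, hk, hsk⟩ := hδs.exists_dist_le hδq hμ (hγ.shift min_le_max (max_le hi hj)) hK hε
    (by simpa using h0.symm) (by simpa using hm.symm) hs
  exact ⟨min i j + k, by lia, (d.triangle _ _ _).trans (add_le_add hts hsk)⟩

end Coarse

section WordMetric

variable {G : Type*} [Group G] {S : Set G}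

theorem mem_pow_iff_exists_list {M : Type*} [Monoid M] {s : Set M} {n : ℕ} {a : M} :
    a ∈ s ^ n ↔ ∃ l : List M, l.length = n ∧ (∀ x ∈ l, x ∈ s) ∧ l.prod = a := by
  induction n generalizing a with
  | zero => simp [eq_comm]
  | succ n ih =>
    simp only [pow_succ', Set.mem_mul, ih]
    constructor
    · rintro ⟨x, hx, _, ⟨l, rfl, hl, rfl⟩, rfl⟩
      exact ⟨x :: l, rfl, List.forall_mem_cons.2 ⟨hx, hl⟩, List.prod_cons⟩
    · rintro ⟨_ | ⟨x, l⟩, hlen, hl, rfl⟩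
      · simp at hlen
      · exact ⟨x, hl x List.mem_cons_self, l.prod,
          ⟨l, by simpa using hlen, (List.forall_mem_cons.1 hl).2, rfl⟩, List.prod_cons.symm⟩

theorem inv_mul_mem_pow_of_steps {A : Set G} {γ : ℕ → G} {n : ℕ}
    (hγ : ∀ k < n, (γ k)⁻¹ * γ (k + 1) ∈ A) : (γ 0)⁻¹ * γ n ∈ A ^ n := by
  induction n with
  | zero => simp
  | succ n ih =>
    rw [pow_succ]
    simpa [mul_assoc] using
      Set.mul_mem_mul (ih fun k hk ↦ hγ k (hk.trans n.lt_succ_self)) (hγ n n.lt_succ_self)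

theorem exists_steps_of_mem_pow {A : Set G} {n : ℕ} {g : G} (hg : g ∈ A ^ n) :
    ∃ γ : ℕ → G, γ 0 = 1 ∧ γ n = g ∧ ∀ k < n, (γ k)⁻¹ * γ (k + 1) ∈ A := by
  obtain ⟨l, rfl, hl, rfl⟩ := mem_pow_iff_exists_list.1 hg
  refine ⟨fun k ↦ (l.take k).prod, by simp, by simp, fun k hk ↦ ?_⟩
  simpa [List.prod_take_succ l k hk] using hl _ (l.getElem_mem hk)

theorem wordLength_eq_sInf (S : Set G) (g : G) :
    wordLength S g = sInf {n | g ∈ (S ∪ S⁻¹) ^ n} := by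
  simp only [wordLength, mem_pow_iff_exists_list, Set.mem_union, Set.mem_inv]

theorem wordLength_le_of_mem_pow {n : ℕ} {g : G} (hg : g ∈ (S ∪ S⁻¹) ^ n) :
    wordLength S g ≤ n := by
  rw [wordLength_eq_sInf]
  exact Nat.sInf_le hg

theorem exists_mem_pow_of_mem_closure {g : G} (hg : g ∈ Subgroup.closure S) :
    ∃ n, g ∈ (S ∪ S⁻¹) ^ n := by
  rw [← Subgroup.mem_toSubmonoid, Subgroup.closure_toSubmonoid] at hg
  obtain ⟨l, hl, hprod⟩ := Submonoid.exists_list_of_mem_closure hg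
  exact ⟨l.length, mem_pow_iff_exists_list.2 ⟨l, rfl, hl, hprod⟩⟩

theorem mem_pow_wordLength (hS : Subgroup.closure S = ⊤) (g : G) :
    g ∈ (S ∪ S⁻¹) ^ wordLength S g := by
  rw [wordLength_eq_sInf]
  exact Nat.sInf_mem (exists_mem_pow_of_mem_closure (hS ▸ Subgroup.mem_top g))

theorem closure_eq_top_of_forall_mem_pow (h : ∀ g, ∃ n, g ∈ (S ∪ S⁻¹) ^ n) :
    Subgroup.closure S = ⊤ := by
  refine eq_top_iff.2 fun g _ ↦ ?_
  obtain ⟨n, hg⟩ := h g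
  obtain ⟨l, -, hl, rfl⟩ := mem_pow_iff_exists_list.1 hg
  refine Subgroup.list_prod_mem _ fun x hx ↦ ?_
  rw [← Subgroup.mem_toSubmonoid, Subgroup.closure_toSubmonoid]
  exact Submonoid.subset_closure (hl x hx)

theorem wordLength_one (S : Set G) : wordLength S 1 = 0 :=
  Nat.le_zero.1 (wordLength_le_of_mem_pow (n := 0) (by simp))

theorem wordLength_mul_le (hS : Subgroup.closure S = ⊤) (g h : G) :
    wordLength S (g * h) ≤ wordLength S g + wordLength S h := by
  refine wordLength_le_of_mem_pow ?_
  rw [pow_add]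
  exact Set.mul_mem_mul (mem_pow_wordLength hS g) (mem_pow_wordLength hS h)

theorem wordLength_inv (S : Set G) (g : G) : wordLength S g⁻¹ = wordLength S g := by
  have hinv (n : ℕ) : g⁻¹ ∈ (S ∪ S⁻¹) ^ n ↔ g ∈ (S ∪ S⁻¹) ^ n := by
    rw [← Set.mem_inv, ← inv_pow, Set.union_inv, inv_inv, Set.union_comm]
  simp only [wordLength_eq_sInf, hinv]

/-- The word metric of a generating set, bundled with the axioms of a pseudometric. -/
noncomputable def wordPseudoMetric (hS : Subgroup.closure S = ⊤) : PseudoMetric G ℝ where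
  toFun := wordDist S
  refl' g := by simp [wordDist, wordLength_one]
  symm' g h := by rw [wordDist, ← wordLength_inv, mul_inv_rev, inv_inv, wordDist]
  triangle' g h k := by
    have hmul := wordLength_mul_le hS (g⁻¹ * h) (h⁻¹ * k)
    rw [mul_assoc, mul_inv_cancel_left] at hmul
    simp only [wordDist]
    exact mod_cast hmul

theorem exists_isGeodesic (hS : Subgroup.closure S = ⊤) (g h : G) :
    ∃ (n : ℕ) (γ : ℕ → G), γ 0 = g ∧ γ n = h ∧ IsGeodesic (wordDist S) n γ ∧
      wordLength S (g⁻¹ * h) = n := by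
  obtain ⟨γ, h0, hn, hγ⟩ := exists_steps_of_mem_pow (mem_pow_wordLength hS (g⁻¹ * h))
  have hdist (k l : ℕ) : wordDist S (g * γ k) (g * γ l) = wordLength S ((γ k)⁻¹ * γ l) := by
    simp [wordDist, mul_assoc]
  refine ⟨_, fun k ↦ g * γ k, by simp [h0], by simp [hn],
    isGeodesic_of_dist_succ_le_one (d := wordPseudoMetric hS) (fun k hk ↦ ?_) ?_, rfl⟩
  · refine (hdist k (k + 1)).trans_le ?_
    exact mod_cast wordLength_le_of_mem_pow (by simpa using hγ k hk)
  · refine (hdist 0 _).ge.trans' ?_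
    simp [h0, hn]

theorem finite_setOf_wordLength_le (hSfin : S.Finite) (hS : Subgroup.closure S = ⊤) (r : ℝ) :
    {g : G | wordLength S g ≤ r}.Finite := by
  have hpow (n : ℕ) : ((S ∪ S⁻¹) ^ n).Finite := by
    induction n with
    | zero => simp
    | succ n ih => exact pow_succ (S ∪ S⁻¹) n ▸ ih.mul (hSfin.union hSfin.inv)
  refine ((Set.finite_Iic ⌊r⌋₊).biUnion fun n _ ↦ hpow n).subset fun g hg ↦ ?_
  exact Set.mem_biUnion (Nat.le_floor hg) (mem_pow_wordLength hS g)

theorem wordLength_map_le {H : Type*} [Group H] {T : Set H} {C : ℝ} {φ : G →* H}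
    (hS : Subgroup.closure S = ⊤) (hT : Subgroup.closure T = ⊤)
    (hφ : ∀ s ∈ S, wordLength T (φ s) ≤ C) (g : G) :
    wordLength T (φ g) ≤ C * wordLength S g := by
  have hpow (n : ℕ) (x : G) (hx : x ∈ (S ∪ S⁻¹) ^ n) : wordLength T (φ x) ≤ C * n := by
    induction n generalizing x with
    | zero => simp_all [wordLength_one]
    | succ n ih =>
      obtain ⟨y, hy, s, hs, rfl⟩ := hx
      have hs : wordLength T (φ s) ≤ C := by
        rcases hs with hs | hs
        · exact hφ s hs
        · simpa [wordLength_inv] using hφ _ hs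
      calc (wordLength T (φ (y * s)) : ℝ) ≤ wordLength T (φ y) + wordLength T (φ s) := by
            rw [map_mul]; exact mod_cast wordLength_mul_le hT _ _
        _ ≤ C * n + C := add_le_add (ih y hy) hs
        _ = C * (n + 1 : ℕ) := by push_cast; ring
  exact hpow _ g (mem_pow_wordLength hS g)

end WordMetric

section Quasiconvex

open Filter

variable {A G : Type*} [Group A] [Group G] {T : Set A} {S : Set G} {φ : A →* G}

theorem wordDist_map (S : Set G) (φ : A →* G) (a b : A) :
    wordDist S (φ a) (φ b) = wordLength S (φ (a⁻¹ * b)) := by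
  rw [wordDist, map_mul, map_inv]

theorem IsQuasiconvex.exists_forall_mem_pow_wordLength_add_two (hS : Subgroup.closure S = ⊤)
    (hφ : IsQuasiconvex S φ.range) :
    ∃ C : ℝ, 1 ≤ C ∧ ∀ a : A, a ∈ {u | wordLength S (φ u) ≤ C} ^ (wordLength S (φ a) + 2) := by
  obtain ⟨C, hC, hφ⟩ := hφ
  refine ⟨C + 1 + C, by linarith, fun a ↦ ?_⟩
  set U := {u | wordLength S (φ u) ≤ C + 1 + C}
  obtain ⟨n, γ, h0, hn, hγ, hlen⟩ := exists_isGeodesic hS 1 (φ a)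
  have hnear : ∀ i ≤ n, ∃ z, wordDist S (γ i) (φ z) ≤ C := fun i hi ↦ by
    obtain ⟨_, ⟨z, rfl⟩, hz⟩ := hφ n γ hγ (h0 ▸ one_mem _) (hn ▸ ⟨a, rfl⟩) i hi
    exact ⟨z, hz⟩
  choose! z hz using hnear
  let d := wordPseudoMetric hS
  have hstart : z 0 ∈ U := by
    have : wordDist S (φ 1) (φ (z 0)) ≤ C := by simpa [h0] using hz 0 n.zero_le
    rw [wordDist_map, inv_one, one_mul] at this
    exact this.trans (by linarith)
  have hend : (z n)⁻¹ * a ∈ U := by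
    have : wordDist S (φ (z n)) (φ a) ≤ C := (d.symm _ _).trans_le (hn ▸ hz n le_rfl)
    rw [wordDist_map] at this
    exact this.trans (by linarith)
  have hstep (k : ℕ) (hk : k < n) : (z k)⁻¹ * z (k + 1) ∈ U := by
    have hγk : wordDist S (γ k) (γ (k + 1)) = 1 := by simpa using hγ k (k + 1) hk.le hk
    refine (wordDist_map S φ _ _).ge.trans ?_
    calc d (φ (z k)) (φ (z (k + 1)))
        ≤ d (φ (z k)) (γ k) + d (γ k) (γ (k + 1)) + d (γ (k + 1)) (φ (z (k + 1))) :=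
          (d.triangle _ (γ (k + 1)) _).trans (by gcongr; exact d.triangle _ _ _)
      _ ≤ C + 1 + C := by
          refine add_le_add (add_le_add ?_ hγk.le) (hz _ hk)
          exact (d.symm _ _).trans_le (hz k hk.le)
  have hmid : (z 0)⁻¹ * z n ∈ U ^ n := inv_mul_mem_pow_of_steps hstep
  rw [inv_one, one_mul] at hlen
  rw [hlen, pow_succ, pow_succ']
  simpa [mul_assoc] using Set.mul_mem_mul (Set.mul_mem_mul hstart hmid) hend

theorem IsQuasiconvex.exists_isQIEmbedding (hSfin : S.Finite) (hS : Subgroup.closure S = ⊤)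
    (hφ : IsQuasiconvex S φ.range) (hφfin : Tendsto φ cofinite cofinite) :
    ∃ U : Set A, U.Finite ∧ Subgroup.closure U = ⊤ ∧
      ∃ K, 1 ≤ K ∧ IsQIEmbedding (wordDist U) (wordDist S) K 2 φ := by
  obtain ⟨C, hC, hmem⟩ := hφ.exists_forall_mem_pow_wordLength_add_two hS
  set U := {u : A | wordLength S (φ u) ≤ C}
  have hmem (a : A) : a ∈ (U ∪ U⁻¹) ^ (wordLength S (φ a) + 2) :=
    Set.pow_subset_pow_left Set.subset_union_left (hmem a)
  have hU : Subgroup.closure U = ⊤ := closure_eq_top_of_forall_mem_pow fun a ↦ ⟨_, hmem a⟩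
  have hUfin : U.Finite := by
    simpa [← Set.preimage_compl] using
      hφfin (finite_setOf_wordLength_le hSfin hS C).compl_mem_cofinite
  refine ⟨U, hUfin, hU, C, hC, fun a b ↦ ?_⟩
  rw [wordDist_map, wordDist]
  constructor
  · calc 1 / C * wordLength U (a⁻¹ * b) - 2 ≤ 1 * (wordLength U (a⁻¹ * b) : ℝ) - 2 := by
          gcongr
          exact (div_le_one₀ (by positivity)).2 hC
      _ ≤ wordLength S (φ (a⁻¹ * b)) := by
          rw [one_mul, sub_le_iff_le_add]
          exact mod_cast wordLength_le_of_mem_pow (hmem _)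
  · exact (wordLength_map_le hU hS (fun _ ↦ id) _).trans (by linarith)

/-- `H` is strongly quasiconvex (a Morse subgroup) in `(G, d_S)`: every `(K, ε)`-quasigeodesic with
endpoints in `H` lies in a neighbourhood of `H` whose radius depends only on `K` and `ε`. -/
def IsStronglyQuasiconvex (S : Set G) (H : Subgroup G) : Prop :=
  ∀ K ε : ℝ, 1 ≤ K → 0 ≤ ε → ∃ r : ℝ, ∀ (n : ℕ) (γ : ℕ → G),
    IsQuasigeodesic (wordDist S) K ε n γ → γ 0 ∈ H → γ n ∈ H →
      ∀ i ≤ n, ∃ h ∈ H, wordDist S (γ i) h ≤ r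

theorem exists_wordDist_comap_le (hSfin : S.Finite) (hS : Subgroup.closure S = ⊤) (T : Set A)
    (φ : A →* G) (H : Subgroup G) (r : ℝ) :
    ∃ R : ℝ, 0 ≤ R ∧ ∀ a, ∀ h ∈ H, wordDist S (φ a) h ≤ r →
      ∃ z ∈ H.comap φ, wordDist T a z ≤ R := by
  -- All `a` with `φ a * g ∈ H` lie in the same coset of `H.comap φ`.
  have hcoset (g : G) : ∃ R : ℕ, ∀ a, φ a * g ∈ H → ∃ z ∈ H.comap φ, wordDist T a z ≤ R := by
    by_cases hg : ∃ b, φ b * g ∈ H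
    · obtain ⟨b, hb⟩ := hg
      refine ⟨wordLength T b⁻¹, fun a ha ↦ ⟨a * b⁻¹, ?_, by simp [wordDist]⟩⟩
      simpa [mul_assoc] using H.mul_mem ha (H.inv_mem hb)
    · exact ⟨0, fun a ha ↦ (hg ⟨a, ha⟩).elim⟩
  choose R hR using hcoset
  obtain ⟨C, hC⟩ := ((finite_setOf_wordLength_le hSfin hS r).image R).bddAbove
  refine ⟨C, C.cast_nonneg, fun a h hh hah ↦ ?_⟩
  obtain ⟨z, hz, haz⟩ := hR ((φ a)⁻¹ * h) a (by simpa using hh)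
  exact ⟨z, hz, haz.trans (mod_cast hC ⟨_, hah, rfl⟩)⟩

theorem IsStronglyQuasiconvex.isQuasiconvex_comap {H : Subgroup G} {K ε : ℝ}
    (hH : IsStronglyQuasiconvex S H) (hSfin : S.Finite) (hS : Subgroup.closure S = ⊤)
    (hK : 1 ≤ K) (hε : 0 ≤ ε) (hφ : IsQIEmbedding (wordDist T) (wordDist S) K ε φ) :
    IsQuasiconvex T (H.comap φ) := by
  obtain ⟨r, hr⟩ := hH K ε hK hε
  obtain ⟨R, hR, hnear⟩ := exists_wordDist_comap_le hSfin hS T φ H r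
  refine ⟨R, hR, fun n γ hγ h0 hn i hi ↦ ?_⟩
  obtain ⟨h, hh, hih⟩ := hr n _ (hφ.isQuasigeodesic hγ) h0 hn i hi
  exact hnear (γ i) h hh hih

end Quasiconvex

section Stable

variable {A B G : Type*} [Group A] [Group B] [Group G] {S : Set G} {T : Set A}

/-- `φ : (A, d_T) → (G, d_S)` is stable: it is a quasi-isometric embedding that sends every
`d_T`-geodesic to an `f`-stable path. Inclusions of stable subgroups are the main example; working
with homomorphisms allows passing to a subgroup by composition. -/
def IsStableHom (T : Set A) (S : Set G) (f : ℝ → ℝ → ℝ) (φ : A →* G) : Prop :=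
  (∃ μ c : ℝ, 1 ≤ μ ∧ 0 ≤ c ∧ IsQIEmbedding (wordDist T) (wordDist S) μ c φ) ∧
    ∀ (n : ℕ) (γ : ℕ → A), IsGeodesic (wordDist T) n γ →
      IsStablePath (wordDist S) f n (fun i ↦ φ (γ i))

theorem isStableSubgroup_iff {H : Subgroup G} :
    IsStableSubgroup S H ↔ ∃ (f : ℝ → ℝ → ℝ) (T : Set H), T.Finite ∧ Subgroup.closure T = ⊤ ∧
      IsStableHom T S f H.subtype := by
  constructor
  · rintro ⟨f, T, hTfin, hT, hqi, hpath⟩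
    exact ⟨f, T, hTfin, hT, hqi, fun n γ hγ ↦ (hpath n γ hγ).2⟩
  · rintro ⟨f, T, hTfin, hT, ⟨μ, c, hμ, hc, hqi⟩, hpath⟩
    exact ⟨f, T, hTfin, hT, ⟨μ, c, hμ, hc, hqi⟩, fun n γ hγ ↦
      ⟨⟨μ, c, hμ, hc, hqi.isQuasigeodesic hγ⟩, hpath n γ hγ⟩⟩

theorem IsStableHom.comp {U : Set B} {f : ℝ → ℝ → ℝ} {φ : A →* G} {ψ : B →* A} {K ε : ℝ}
    (hφ : IsStableHom T S f φ) (hS : Subgroup.closure S = ⊤) (hT : Subgroup.closure T = ⊤)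
    (hψ : IsQIEmbedding (wordDist U) (wordDist T) K ε ψ) (hK : 1 ≤ K) (hε : 0 ≤ ε) :
    ∃ f', IsStableHom U S f' (φ.comp ψ) := by
  obtain ⟨⟨μ, c, hμ, hc, hqi⟩, hpath⟩ := hφ
  have hcomp : IsQIEmbedding (wordDist U) (wordDist S) (μ * K) (μ * ε + c) (φ.comp ψ) :=
    hqi.comp hψ hμ hε
  have hμK : 1 ≤ μ * K := one_le_mul_of_one_le_of_one_le hμ hK
  refine ⟨fun K' ε' ↦ f K' ε' + trackingRadius μ c (μ * K + (μ * ε + c)) (f (μ * K) (μ * ε + c)),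
    ⟨μ * K, μ * ε + c, hμK, by positivity, hcomp⟩, fun n γ hγ ↦ ?_⟩
  refine (hcomp.isQuasigeodesic hγ).isStablePath (d := wordPseudoMetric hS) hμK (by positivity)
    (zero_lt_one.trans_le hμ) fun a b _ _ ↦ ?_
  obtain ⟨m, δ, h0, hm, hδ, -⟩ := exists_isGeodesic hT (ψ (γ a)) (ψ (γ b))
  exact ⟨m, fun i ↦ φ (δ i), congrArg φ h0, congrArg φ hm, hqi.isQuasigeodesic hδ, hpath m δ hδ⟩

theorem IsStableHom.isStronglyQuasiconvex_range {f : ℝ → ℝ → ℝ} {φ : A →* G}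
    (hφ : IsStableHom T S f φ) (hT : Subgroup.closure T = ⊤) :
    IsStronglyQuasiconvex S φ.range := by
  rintro K ε hK hε
  refine ⟨f K ε, fun n γ hγ ⟨a, ha⟩ ⟨b, hb⟩ i hi ↦ ?_⟩
  obtain ⟨m, δ, h0, hm, hδ, -⟩ := exists_isGeodesic hT a b
  obtain ⟨u, -, hu⟩ := hφ.2 m δ hδ K ε hK hε n γ hγ ⟨0, m.zero_le, by simp only [h0, ha]⟩
    ⟨m, le_rfl, by simp only [hm, hb]⟩ i hi
  exact ⟨φ (δ u), ⟨δ u, rfl⟩, hu⟩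

theorem IsStableSubgroup.isStronglyQuasiconvex {H : Subgroup G} (hH : IsStableSubgroup S H) :
    IsStronglyQuasiconvex S H := by
  obtain ⟨f, T, -, hT, hH⟩ := isStableSubgroup_iff.1 hH
  simpa using hH.isStronglyQuasiconvex_range hT

theorem inf_isStableSubgroup_general (hSfin : S.Finite) (hSgen : Subgroup.closure S = ⊤)
    (H₁ H₂ : Subgroup G) (h₁ : IsStableSubgroup S H₁) (h₂ : IsStronglyQuasiconvex S H₂) :
    IsStableSubgroup S (H₁ ⊓ H₂) := by
  obtain ⟨f, T, hTfin, hT, hstable⟩ := isStableSubgroup_iff.1 h₁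
  obtain ⟨μ, c, hμ, hc, hqi⟩ := hstable.1
  have hrange : (Subgroup.inclusion (inf_le_left : H₁ ⊓ H₂ ≤ H₁)).range = H₂.comap H₁.subtype :=
    (Subgroup.inclusion_range _).trans (Subgroup.inf_subgroupOf_left H₂ H₁)
  have hqc : IsQuasiconvex T (Subgroup.inclusion (inf_le_left : H₁ ⊓ H₂ ≤ H₁)).range :=
    hrange ▸ h₂.isQuasiconvex_comap hSfin hSgen hμ hc hqi
  obtain ⟨U, hUfin, hU, K, hK, hincl⟩ :=
    hqc.exists_isQIEmbedding hTfin hT (Subgroup.inclusion_injective _).tendsto_cofinite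
  obtain ⟨f', hf'⟩ := hstable.comp hSgen hT hincl hK zero_le_two
  exact isStableSubgroup_iff.2 ⟨f', U, hUfin, hU, hf'⟩

end Stable

/-- **Intersections of stable subgroups are stable.** -/
theorem inf_isStableSubgroup {G : Type*} [Group G] (S : Set G) (hSfin : S.Finite)
    (hSgen : Subgroup.closure S = ⊤) (H₁ H₂ : Subgroup G)
    (h₁ : IsStableSubgroup S H₁) (h₂ : IsStableSubgroup S H₂) :
    IsStableSubgroup S (H₁ ⊓ H₂) :=
  inf_isStableSubgroup_general hSfin hSgen H₁ H₂ h₁ h₂.isStronglyQuasiconvex
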